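/- Let t_N := ⌈(1/2)(1−ρ)ρ N log N⌉. There exists a constant C such that for all N > 0, all reals R > 0 and all initial states ξ₀ ∈ Ξ_{n,S,κ}, the load profile chain satisfies P_{ξ₀}( ξ(t_N) ∉ Ξ(R/√N) ) ≤ CQ/R². -/

import Mathlib

/-! The squared deviation `Z(ξ) = ∑ᵥ (ξᵥ - n/Q)²` is a Lyapunov function with an explicit drift.
Moving a unit from `m` to `p ≠ m` changes `Z` by `2 (ξₚ - ξₘ) + 2`, and averaging over the
transition gives exactly
`E[Z(ξ')] = (1 - 2λ) Z(ξ) + 2 P(ξ' ≠ ξ)`, with `λ = N / (n (1 + N - n))`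
(`sum_loadP_sqDev_le` bounds the probability by one; it is derived from the general one-step formula `sum_loadP_mul`).
Iterating, `E[Z(ξ(t))] ≤ exp(-2λt) Z(ξ₀) + 2 + 1/λ`, where `1/λ ≤ N + 1`.
Since `n (1 + N - n) ≤ ρN ((1 - ρ)N + 2)` and `log N ≤ N`, the choice of `t_N` yields
`2λ t_N ≥ log N - 2/(1 - ρ)`, so the first term is at most `exp(2/(1 - ρ)) Z(ξ₀)/N = O(N)`.
Replacing the centre `n/Q` by `ρN/Q` costs a bounded amount because `n = ⌊ρN⌋`, and Markov's
inequality for the squared distance concludes. If `n = 0` there is a single state and `Z = 0`. -/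

open scoped BigOperators
open Filter MeasureTheory

noncomputable section

namespace CongestionPaper

attribute [local instance 10] Classical.propDecidable

/-- Evolution of a distribution under a transition kernel `p` on a finite state space:
`evolve p mu t` is the law at time `t` of the Markov chain with transition matrix `p`
and initial distribution `mu`. -/
def evolve {X : Type*} [Fintype X] (p : X -> X -> Real) (mu : X -> Real) : Nat -> X -> Real
  | 0 => mu
  | (t+1) => fun y => ∑ x, evolve p mu t x * p x y

/-- Point mass at `x0`. -/
def delta {X : Type*} (x0 : X) : X -> Real := fun x => if x = x0 then 1 else 0

/-- Total variation distance between two distributions on a finite type,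
as the supremum over events `A` of the difference of probabilities of `A`. -/
def tvDist {X : Type*} [Fintype X] (mu nu : X -> Real) : Real :=
  ⨆ A : Finset X, |∑ x ∈ A, (mu x - nu x)|

/-- Total variation distance between the pushforwards of `mu` and `nu` under `m`. -/
def tvDistOn {X : Type*} [Fintype X] {Y : Type*} (m : X -> Y) (mu nu : X -> Real) : Real :=
  ⨆ B : Finset Y, |∑ x : X, (if m x ∈ B then mu x - nu x else 0)|

/-- Worst-case (over the initial state) total variation distance to `pi` at time `t`. -/
def DTV {X : Type*} [Fintype X] (p : X -> X -> Real) (pi : X -> Real) (t : Nat) : Real :=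
  ⨆ x0 : X, tvDist (evolve p (delta x0) t) pi

/-- Mixing time `T^mix(eps)`. -/
def Tmix {X : Type*} [Fintype X] (p : X -> X -> Real) (pi : X -> Real) (eps : Real) : Nat :=
  sInf {t : Nat | DTV p pi t ≤ eps}

/-- Probability of a given trajectory `w` of length `T` for the chain started at `x0`. -/
def pathProb {X : Type*} [Fintype X] (p : X -> X -> Real) (x0 : X) (T : Nat)
    (w : Fin (T+1) -> X) : Real :=
  (if w 0 = x0 then 1 else 0) * ∏ t : Fin T, p (w t.castSucc) (w t.succ)

/-- Probability that some state visited up to time `T` satisfies `Bad`. -/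
def hitProb {X : Type*} [Fintype X] (p : X -> X -> Real) (x0 : X) (T : Nat)
    (Bad : X -> Prop) : Real :=
  ∑ w : Fin (T+1) -> X, (if ∃ t, Bad (w t) then pathProb p x0 T w else 0)

/-! ### The load profile chain -/

/-- Load profiles: `xi : S -> {0,...,kappa}` with `∑ xi v = n`, where `S = Fin Q`. -/
abbrev LoadState (Q kap n : Nat) := {xi : Fin Q -> Fin (kap+1) // (∑ v, ((xi v : Nat))) = n}

/-- Transition matrix of the load profile chain on `Xi_{n,S,kappa}`. -/
def loadP (Q kap n : Nat) (xi xi' : LoadState Q kap n) : Real :=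
  if xi' = xi then
    (∑ v, ((xi.1 v : Nat) : Real) * (((1 + kap - (xi.1 v : Nat) : Nat)) : Real))
      / ((n : Real) * ((1 + kap * Q - n : Nat) : Real))
  else
    (∑ vm, ∑ vp,
      if vm ≠ vp ∧ (xi'.1 vm : Nat) + 1 = (xi.1 vm : Nat) ∧ (xi'.1 vp : Nat) = (xi.1 vp : Nat) + 1 ∧
          (∀ v, v ≠ vm -> v ≠ vp -> xi'.1 v = xi.1 v)
        then ((xi.1 vm : Nat) : Real) * (((kap - (xi.1 vp : Nat) : Nat)) : Real) else 0)
      / ((n : Real) * ((1 + kap * Q - n : Nat) : Real))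

/-- Stationary weight `∏_v 1/(xi_v! (kappa - xi_v)!)`. -/
def loadWeight (Q kap n : Nat) (xi : LoadState Q kap n) : Real :=
  ∏ v, (1 : Real) /
    ((Nat.factorial (xi.1 v : Nat) : Real) * (Nat.factorial (kap - (xi.1 v : Nat)) : Real))

/-- The stationary distribution `pi_n` of the load profile chain. -/
def loadPi (Q kap n : Nat) (xi : LoadState Q kap n) : Real :=
  loadWeight Q kap n xi / (∑ eta : LoadState Q kap n, loadWeight Q kap n eta)

/-- `xi ∈ Xi(delta)`: the normalized load profile is within Euclidean distance `delta`
of the constant vector `(rho/Q)_v`. -/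
def loadNear (Q kap n : Nat) (rho : Real) (xi : LoadState Q kap n) (del : Real) : Prop :=
  Real.sqrt (∑ v, (((xi.1 v : Nat) : Real) / ((kap * Q : Nat) : Real) - rho / (Q : Real))^2) ≤ del

/-- `D(xi, xi') = (1/2) ∑_v |xi_v - xi'_v|`. -/
def loadD (Q kap n : Nat) (xi xi' : LoadState Q kap n) : Real :=
  (1/2) * ∑ v, |((xi.1 v : Nat) : Real) - ((xi'.1 v : Nat) : Real)|

/-! ### The congestion dynamics (Glauber dynamics) -/

/-- `xi_v(sigma)`: the number of players adopting resource `v`. -/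
def xiCount {Q n : Nat} (sg : Fin n -> Fin Q) (v : Fin Q) : Nat :=
  (Finset.univ.filter fun i => sg i = v).card

/-- Configurations: `sigma : [n] -> S` with `xi_v(sigma) ≤ kappa` for every `v`. -/
abbrev ConfigState (Q kap n : Nat) := {sg : Fin n -> Fin Q // ∀ v, xiCount sg v ≤ kap}

/-- Transition matrix of the congestion dynamics. -/
def configP (Q kap n : Nat) (sg sg' : ConfigState Q kap n) : Real :=
  if sg' = sg then
    (∑ i, ((1 + kap - xiCount sg.1 (sg.1 i) : Nat) : Real))
      / ((n : Real) * ((1 + kap * Q - n : Nat) : Real))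
  else
    (∑ i, if sg'.1 i ≠ sg.1 i ∧ (∀ j, j ≠ i -> sg'.1 j = sg.1 j)
        then ((kap - xiCount sg.1 (sg'.1 i) : Nat) : Real) else 0)
      / ((n : Real) * ((1 + kap * Q - n : Nat) : Real))

/-- The potential `F(sigma) = ∑_v ∑_{s=0}^{xi_v(sigma)} (log(kappa+1) - log(kappa+1-s))`. -/
def potF (Q kap n : Nat) (sg : ConfigState Q kap n) : Real :=
  ∑ v, ∑ s ∈ Finset.range (xiCount sg.1 v + 1),
    (Real.log ((kap : Real) + 1) - Real.log ((kap : Real) + 1 - (s : Real)))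

/-- The Gibbs measure `mu_n(sigma) = e^{-F(sigma)}/Z_n`. -/
def gibbs (Q kap n : Nat) (sg : ConfigState Q kap n) : Real :=
  Real.exp (-(potF Q kap n sg)) / (∑ ta : ConfigState Q kap n, Real.exp (-(potF Q kap n ta)))

/-- `sigma ∈ S(delta)`. -/
def configNear (Q kap n : Nat) (rho : Real) (sg : ConfigState Q kap n) (del : Real) : Prop :=
  Real.sqrt (∑ v, ((xiCount sg.1 v : Real) / ((kap * Q : Nat) : Real) - rho / (Q : Real))^2) ≤ del

/-- The load matrix `xi^{sigma0}_{u,v}(sigma)`. -/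
def ximat {Q n : Nat} (sg0 sg : Fin n -> Fin Q) (u v : Fin Q) : Nat :=
  (Finset.univ.filter fun i => sg0 i = u ∧ sg i = v).card

/-- `sigma ∈ S(sigma0, delta)`: for each `u`, the normalized `u`-th row of the
load matrix is within Euclidean distance `delta` of the constant vector `(1/Q)_v`. -/
def configNearMat (Q kap n : Nat) (sg0 sg : ConfigState Q kap n) (del : Real) : Prop :=
  ∀ u, Real.sqrt
      (∑ v, ((ximat sg0.1 sg.1 u v : Real) / (xiCount sg0.1 u : Real) - 1 / (Q : Real))^2) ≤ del

/-- `D^{sigma0}(sigma, sigma') = ∑_u (1/2) ∑_v |xi^{sigma0}_{u,v}(sigma) - xi^{sigma0}_{u,v}(sigma')|`. -/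
def matD (Q kap n : Nat) (sg0 sg sg' : ConfigState Q kap n) : Real :=
  ∑ u, (1/2) * ∑ v, |(ximat sg0.1 sg.1 u v : Real) - (ximat sg0.1 sg'.1 u v : Real)|

/-- The constant `cStar = (sqrt Q/(1-rho) + rho/(2Q))^{1/2}`. -/
def cStar (Q : Nat) (rho : Real) : Real :=
  Real.sqrt (Real.sqrt (Q : Real) / (1 - rho) + rho / (2 * (Q : Real)))

/-! ### The base-exchange chain on `B^(Q)(n)` -/

/-- `B^(Q)(n) = {x ∈ Z_{≥0}^Q : ∑ x_i = n}`. -/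
abbrev BState (Q n : Nat) := {x : Fin Q -> Fin (n+1) // (∑ i, ((x i : Nat))) = n}

/-- Transition matrix of the base-exchange chain on `B^(Q)(n)`. -/
def baseP (Q n : Nat) (x y : BState Q n) : Real :=
  if y = x then
    ∑ i, (if 0 < (x.1 i : Nat) then (1 : Real) / ((Q : Real) * (Q : Real)) else (1 : Real) / (Q : Real))
  else
    ∑ i, ∑ j,
      if i ≠ j ∧ (y.1 i : Nat) + 1 = (x.1 i : Nat) ∧ (y.1 j : Nat) = (x.1 j : Nat) + 1 ∧
          (∀ v, v ≠ i -> v ≠ j -> y.1 v = x.1 v)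
        then (1 : Real) / ((Q : Real) * (Q : Real)) else 0

/-- The lazy version of the base-exchange chain. -/
def lazyBaseP (Q n : Nat) (x y : BState Q n) : Real :=
  (1/2) * (if y = x then 1 else 0) + (1/2) * baseP Q n x y

/-- The uniform distribution on `B^(Q)(n)`. -/
def unifB (Q n : Nat) (x : BState Q n) : Real := 1 / (Fintype.card (BState Q n) : Real)


/-! ### Expectations along the chain -/

/-- `evolve` paired with a test function obeys the Kolmogorov recursion. -/
lemma sum_evolve_succ {X : Type*} [Fintype X] (p : X → X → ℝ) (mu : X → ℝ) (t : ℕ) (f : X → ℝ) :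
    ∑ y, evolve p mu (t+1) y * f y = ∑ x, evolve p mu t x * ∑ y, p x y * f y := by
  simp only [evolve, Finset.sum_mul, Finset.mul_sum]
  rw [Finset.sum_comm]
  simp only [mul_assoc]

lemma evolve_nonneg {X : Type*} [Fintype X] (p : X → X → ℝ) (mu : X → ℝ)
    (hp : ∀ x y, 0 ≤ p x y) (hmu : ∀ x, 0 ≤ mu x) (t : ℕ) (x : X) : 0 ≤ evolve p mu t x := by
  induction t generalizing x with
  | zero => exact hmu x
  | succ t ih => exact Finset.sum_nonneg fun y _ => mul_nonneg (ih y) (hp y x)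

lemma sum_delta_mul {X : Type*} [Fintype X] (x0 : X) (f : X → ℝ) :
    ∑ x, delta x0 x * f x = f x0 := by
  simp [delta]

/-- A substochastic kernel does not create mass. -/
lemma sum_evolve_le_one {X : Type*} [Fintype X] (p : X → X → ℝ) (x0 : X)
    (hp : ∀ x y, 0 ≤ p x y) (hp1 : ∀ x, ∑ y, p x y ≤ 1) (t : ℕ) :
    ∑ x, evolve p (delta x0) t x ≤ 1 := by
  have hmu : ∀ x, 0 ≤ delta x0 x := fun x => by unfold delta; split_ifs <;> norm_num
  induction t with
  | zero => simpa [evolve] using (sum_delta_mul x0 (fun _ => (1 : ℝ))).le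
  | succ t ih =>
    have h := sum_evolve_succ p (delta x0) t (fun _ => 1)
    simp only [mul_one] at h
    rw [h]
    refine le_trans (Finset.sum_le_sum fun x _ => ?_) ih
    exact mul_le_of_le_one_right (evolve_nonneg p _ hp hmu t x) (hp1 x)

/-- Iterated drift inequality: if `P Z ≤ r Z + 2` pointwise and `K` satisfies `r K + 2 ≤ K`, then
`E Z` at time `t` is at most `r ^ t Z(x₀) + K`. -/
lemma sum_evolve_drift {X : Type*} [Fintype X] (p : X → X → ℝ) (x0 : X)
    (hp : ∀ x y, 0 ≤ p x y) (hp1 : ∀ x, ∑ y, p x y ≤ 1) (Z : X → ℝ) (r K : ℝ) (hr : 0 ≤ r)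
    (hK0 : 0 ≤ K) (hK : r * K + 2 ≤ K)
    (hdrift : ∀ x, ∑ y, p x y * Z y ≤ r * Z x + 2) (t : ℕ) :
    ∑ x, evolve p (delta x0) t x * Z x ≤ r ^ t * Z x0 + K := by
  have hmu : ∀ x, 0 ≤ delta x0 x := fun x => by unfold delta; split_ifs <;> norm_num
  induction t with
  | zero => simpa [evolve, sum_delta_mul] using hK0
  | succ t ih =>
    rw [sum_evolve_succ]
    calc ∑ x, evolve p (delta x0) t x * ∑ y, p x y * Z y
        ≤ ∑ x, evolve p (delta x0) t x * (r * Z x + 2) :=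
          Finset.sum_le_sum fun x _ =>
            mul_le_mul_of_nonneg_left (hdrift x) (evolve_nonneg p _ hp hmu t x)
      _ = r * (∑ x, evolve p (delta x0) t x * Z x) + 2 * ∑ x, evolve p (delta x0) t x := by
          rw [Finset.mul_sum, Finset.mul_sum, ← Finset.sum_add_distrib]
          exact Finset.sum_congr rfl fun x _ => by ring
      _ ≤ r * (r ^ t * Z x0 + K) + 2 * 1 := by
          have := sum_evolve_le_one p x0 hp hp1 t
          gcongr
      _ ≤ r ^ (t+1) * Z x0 + K := by rw [pow_succ]; linarith

/-! ### One step of the load profile chain -/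

/-- The load of resource `v`, as a real number. -/
def load {Q kap n : ℕ} (xi : LoadState Q kap n) (v : Fin Q) : ℝ := ((xi.1 v : ℕ) : ℝ)

/-- The profile `x` after one unit is moved from `m` to `p`. -/
def moved {Q : ℕ} (x : Fin Q → ℝ) (m p : Fin Q) : Fin Q → ℝ :=
  fun v => if v = m then x v - 1 else if v = p then x v + 1 else x v

/-- `xi'` arises from `xi` by moving one unit from `m` to `p ≠ m`. -/
def IsMove {Q kap n : ℕ} (xi xi' : LoadState Q kap n) (m p : Fin Q) : Prop :=
  m ≠ p ∧ (xi'.1 m : ℕ) + 1 = (xi.1 m : ℕ) ∧ (xi'.1 p : ℕ) = (xi.1 p : ℕ) + 1 ∧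
    (∀ v, v ≠ m → v ≠ p → xi'.1 v = xi.1 v)

lemma IsMove.load_eq {Q kap n : ℕ} {xi xi' : LoadState Q kap n} {m p : Fin Q}
    (h : IsMove xi xi' m p) : load xi' = moved (load xi) m p := by
  obtain ⟨hne, h1, h2, h3⟩ := h
  funext v
  unfold moved load
  split_ifs with hm hp
  · subst hm; rw [← h1]; push_cast; ring
  · subst hp; rw [h2]; push_cast; ring
  · rw [h3 v hm hp]

lemma load_injective {Q kap n : ℕ} : Function.Injective (load (Q := Q) (kap := kap) (n := n)) := by
  intro x y h
  apply Subtype.ext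
  funext v
  have := congrFun h v
  unfold load at this
  exact Fin.ext (by exact_mod_cast this)

lemma IsMove.ne {Q kap n : ℕ} {xi xi' : LoadState Q kap n} {m p : Fin Q}
    (h : IsMove xi xi' m p) : xi' ≠ xi := by
  rintro rfl
  have := h.2.1
  omega

lemma exists_isMove {Q kap n : ℕ} (xi : LoadState Q kap n) {m p : Fin Q} (hne : m ≠ p)
    (hm : 0 < (xi.1 m : ℕ)) (hp : (xi.1 p : ℕ) < kap) : ∃ xi', IsMove xi xi' m p := by
  have hlt : ∀ v, (if v = m then (xi.1 v : ℕ) - 1 else if v = p then (xi.1 v : ℕ) + 1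
      else (xi.1 v : ℕ)) < kap + 1 := by
    intro v
    have := (xi.1 v).2
    split_ifs with h1 h2
    · omega
    · subst h2; omega
    · omega
  refine ⟨⟨fun v => ⟨_, hlt v⟩, ?_⟩, hne, ?_, ?_, ?_⟩
  · have hx := xi.2
    rw [← Finset.add_sum_erase _ _ (Finset.mem_univ m),
      ← Finset.add_sum_erase _ _ (Finset.mem_erase.2 ⟨hne.symm, Finset.mem_univ p⟩)] at hx ⊢
    have hs : ∑ v ∈ (Finset.univ.erase m).erase p,
        (if v = m then (xi.1 v : ℕ) - 1 else if v = p then (xi.1 v : ℕ) + 1 else (xi.1 v : ℕ))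
        = ∑ v ∈ (Finset.univ.erase m).erase p, (xi.1 v : ℕ) := by
      refine Finset.sum_congr rfl fun v hv => ?_
      simp only [Finset.mem_erase] at hv
      rw [if_neg hv.2.1, if_neg hv.1]
    simp only [hs, if_true, if_neg hne.symm]
    omega
  · simp only [if_true]; omega
  · simp only [if_true, if_neg hne.symm]
  · intro v h1 h2
    apply Fin.ext
    simp only [if_neg h1, if_neg h2]

/-- Summing over all target states of a given move `m → p`: there is at most one target, and there
is exactly one unless the weight `ξₘ (κ - ξₚ)` vanishes. -/
lemma sum_isMove {Q kap n : ℕ} (xi : LoadState Q kap n) (G : (Fin Q → ℝ) → ℝ) (m p : Fin Q) :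
    (∑ xi' : LoadState Q kap n, (if IsMove xi xi' m p then
        ((xi.1 m : ℕ) : ℝ) * ((kap - (xi.1 p : ℕ) : ℕ) : ℝ) else 0) * G (load xi'))
      = if m ≠ p then load xi m * (kap - load xi p) * G (moved (load xi) m p) else 0 := by
  have hle : (xi.1 p : ℕ) ≤ kap := Nat.lt_succ_iff.1 (xi.1 p).2
  have hw : ((kap - (xi.1 p : ℕ) : ℕ) : ℝ) = kap - load xi p := by
    rw [Nat.cast_sub hle]; rfl
  rw [hw]
  change (∑ xi' : LoadState Q kap n, (if IsMove xi xi' m p then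
        load xi m * (kap - load xi p) else 0) * G (load xi')) = _
  by_cases hne : m ≠ p
  swap
  · rw [if_neg hne]
    exact Finset.sum_eq_zero fun y _ => by rw [if_neg (fun h => hne h.1), zero_mul]
  rw [if_pos hne]
  by_cases hm : 0 < (xi.1 m : ℕ)
  swap
  · have : load xi m = 0 := by unfold load; exact_mod_cast Nat.eq_zero_of_not_pos hm
    simp [this]
  by_cases hp : (xi.1 p : ℕ) < kap
  swap
  · have : (kap : ℝ) - load xi p = 0 := by
      unfold load
      have : (xi.1 p : ℕ) = kap := by omega
      rw [this]; ring
    simp [this]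
  obtain ⟨y, hy⟩ := exists_isMove xi hne hm hp
  rw [Finset.sum_eq_single y]
  · rw [if_pos hy, hy.load_eq]
  · intro z _ hz
    rw [if_neg, zero_mul]
    intro h
    exact hz (load_injective (h.load_eq.trans hy.load_eq.symm))
  · simp

lemma sum_load {Q kap n : ℕ} (xi : LoadState Q kap n) : ∑ v, load xi v = n := by
  have := congrArg (Nat.cast (R := ℝ)) xi.2
  push_cast at this
  exact this

lemma load_nonneg {Q kap n : ℕ} (xi : LoadState Q kap n) (v : Fin Q) : 0 ≤ load xi v :=
  Nat.cast_nonneg _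

lemma load_le {Q kap n : ℕ} (xi : LoadState Q kap n) (v : Fin Q) : load xi v ≤ kap := by
  unfold load
  exact_mod_cast Nat.lt_succ_iff.1 (xi.1 v).2

lemma loadP_nonneg (Q kap n : ℕ) (x y : LoadState Q kap n) : 0 ≤ loadP Q kap n x y := by
  unfold loadP
  split_ifs
  · positivity
  · refine div_nonneg (Finset.sum_nonneg fun m _ => Finset.sum_nonneg fun p _ => ?_)
      (by positivity)
    split_ifs
    · positivity
    · exact le_rfl

/-- The one-step expectation of a function of the loads. -/
lemma sum_loadP_mul {Q kap n : ℕ} (xi : LoadState Q kap n) (G : (Fin Q → ℝ) → ℝ) :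
    ∑ y, loadP Q kap n xi y * G (load y)
      = ((∑ v, load xi v * (1 + kap - load xi v)) * G (load xi)
          + ∑ m, ∑ p, if m ≠ p then load xi m * (kap - load xi p) * G (moved (load xi) m p) else 0)
        / ((n : ℝ) * ((1 + kap * Q - n : ℕ) : ℝ)) := by
  have key : ∀ y, loadP Q kap n xi y * G (load y)
      = ((if y = xi then (∑ v, load xi v * (1 + kap - load xi v)) * G (load xi) else 0)
          + ∑ m, ∑ p, (if IsMove xi y m p then
            ((xi.1 m : ℕ) : ℝ) * ((kap - (xi.1 p : ℕ) : ℕ) : ℝ) else 0) * G (load y))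
        / ((n : ℝ) * ((1 + kap * Q - n : ℕ) : ℝ)) := by
    intro y
    unfold loadP
    by_cases h : y = xi
    · rw [if_pos h, if_pos h]
      have h0 : ∑ m, ∑ p, (if IsMove xi y m p then
            ((xi.1 m : ℕ) : ℝ) * ((kap - (xi.1 p : ℕ) : ℕ) : ℝ) else 0) * G (load y) = 0 :=
        Finset.sum_eq_zero fun m _ => Finset.sum_eq_zero fun p _ => by
          rw [if_neg (fun hm => hm.ne h), zero_mul]
      have h1 : ∑ v, ((xi.1 v : ℕ) : ℝ) * ((1 + kap - (xi.1 v : ℕ) : ℕ) : ℝ)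
          = ∑ v, load xi v * (1 + kap - load xi v) := by
        refine Finset.sum_congr rfl fun v _ => ?_
        have hle := (xi.1 v).2
        rw [Nat.cast_sub (by omega)]
        push_cast
        rfl
      rw [h0, h1, h]
      ring
    · rw [if_neg h, if_neg h, zero_add, div_mul_eq_mul_div]
      simp only [Finset.sum_mul]
      congr 1
      refine Finset.sum_congr rfl fun m _ => Finset.sum_congr rfl fun p _ => ?_
      congr 1
      -- The two sides differ only in the decidability instance of the same proposition.
      exact if_congr Iff.rfl rfl rfl
  simp only [key]
  rw [← Finset.sum_div, Finset.sum_add_distrib]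
  congr 2
  · simp
  · rw [Finset.sum_comm]
    refine Finset.sum_congr rfl fun m _ => ?_
    rw [Finset.sum_comm]
    exact Finset.sum_congr rfl fun p _ => sum_isMove xi G m p

/-- The holding weight and the moving weights add up to `n (1 + N - n)`. -/
lemma sum_weights {Q kap n : ℕ} (xi : LoadState Q kap n) :
    (∑ v, load xi v * (1 + kap - load xi v))
      + (∑ m, ∑ p, if m ≠ p then load xi m * (kap - load xi p) else 0)
      = n * (1 + kap * Q - n) := by
  have h1 : ∀ m, (∑ p, if m ≠ p then load xi m * (kap - load xi p) else 0)
      = load xi m * (kap * Q - n) - load xi m * (kap - load xi m) := by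
    intro m
    have h2 : (∑ p, if m ≠ p then load xi m * (kap - load xi p) else 0)
        = (∑ p, (load xi m * (kap - load xi p)
            - if p = m then load xi m * (kap - load xi p) else 0)) := by
      refine Finset.sum_congr rfl fun p _ => ?_
      by_cases h : m = p
      · simp [h]
      · simp [h, Ne.symm h]
    rw [h2, Finset.sum_sub_distrib, ← Finset.mul_sum, Finset.sum_sub_distrib, sum_load]
    simp only [Finset.sum_const, Finset.card_univ, Fintype.card_fin, nsmul_eq_mul,
      Finset.sum_ite_eq', Finset.mem_univ, if_true]
    ring
  simp only [h1]
  rw [← Finset.sum_add_distrib]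
  have : ∀ v, load xi v * (1 + kap - load xi v)
      + (load xi v * (kap * Q - n) - load xi v * (kap - load xi v))
      = load xi v * (1 + kap * Q - n) := fun v => by ring
  simp only [this]
  rw [← Finset.sum_mul, sum_load]

/-- The transition matrix is stochastic for `n > 0`; for `n = 0` its rows vanish because of the
division by zero. -/
lemma sum_loadP_le_one {Q kap n : ℕ} (hn : n ≤ kap * Q) (xi : LoadState Q kap n) :
    ∑ y, loadP Q kap n xi y ≤ 1 := by
  have h := sum_loadP_mul xi (fun _ => 1)
  simp only [mul_one] at h
  rw [h, sum_weights, Nat.cast_sub (by omega)]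
  push_cast
  exact div_self_le_one _

/-! ### Drift of the squared deviation -/

/-- The squared Euclidean distance from `x` to the constant vector `a`. -/
def sqDev {Q : ℕ} (a : ℝ) (x : Fin Q → ℝ) : ℝ := ∑ v, (x v - a)^2

lemma sqDev_nonneg {Q : ℕ} (a : ℝ) (x : Fin Q → ℝ) : 0 ≤ sqDev a x :=
  Finset.sum_nonneg fun _ _ => sq_nonneg _

lemma sqDev_moved {Q : ℕ} (a : ℝ) (x : Fin Q → ℝ) {m p : Fin Q} (hne : m ≠ p) :
    sqDev a (moved x m p) = sqDev a x + 2 * (x p - x m) + 2 := by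
  have h : ∀ v, (moved x m p v - a)^2 = (x v - a)^2 + (if v = m then 1 - 2 * (x v - a) else 0)
      + (if v = p then 1 + 2 * (x v - a) else 0) := by
    intro v
    unfold moved
    by_cases h1 : v = m
    · have h2 : v ≠ p := by rw [h1]; exact hne
      simp only [if_pos h1, if_neg h2]; ring
    · by_cases h2 : v = p
      · simp only [if_neg h1, if_pos h2]; ring
      · simp only [if_neg h1, if_neg h2]; ring
  unfold sqDev
  simp only [h]
  rw [Finset.sum_add_distrib, Finset.sum_add_distrib]
  simp
  ring

/-- The linear part of the drift: `∑ₘ ∑ₚ ξₘ (κ - ξₚ) · 2 (ξₚ - ξₘ) = -2 N Z(ξ)`. -/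
lemma sum_linear_drift {Q kap n : ℕ} (hQ : 0 < Q) (xi : LoadState Q kap n) :
    ∑ m, ∑ p, load xi m * (kap - load xi p) * (2 * (load xi p - load xi m))
      = -2 * (kap * Q) * sqDev (n / Q) (load xi) := by
  have hQ' : (Q : ℝ) ≠ 0 := by positivity
  have hZ : sqDev (n / Q) (load xi) = ∑ v, (load xi v)^2 - n^2 / Q := by
    unfold sqDev
    have : ∀ v, (load xi v - n / Q)^2
        = (load xi v)^2 - 2 * (n / Q) * load xi v + (n / Q : ℝ)^2 := fun v => by ring
    simp only [this]
    rw [Finset.sum_add_distrib, Finset.sum_sub_distrib, ← Finset.mul_sum, sum_load]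
    simp
    field_simp
    ring
  have h1 : ∀ m, ∑ p, load xi m * (kap - load xi p) * (2 * (load xi p - load xi m))
      = (2 * kap * n - 2 * ∑ v, (load xi v)^2) * load xi m
        - (2 * kap * Q - 2 * n) * (load xi m)^2 := by
    intro m
    have : ∀ p, load xi m * (kap - load xi p) * (2 * (load xi p - load xi m))
        = (2 * load xi m * kap + 2 * (load xi m)^2) * load xi p
          - 2 * load xi m * (load xi p)^2 - 2 * kap * (load xi m)^2 := fun p => by ring
    simp only [this]
    rw [Finset.sum_sub_distrib, Finset.sum_sub_distrib, ← Finset.mul_sum, ← Finset.mul_sum,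
      sum_load]
    simp
    ring
  simp only [h1]
  rw [Finset.sum_sub_distrib, ← Finset.mul_sum, ← Finset.mul_sum, sum_load, hZ]
  field_simp
  ring

lemma sum_loadP_sqDev_le {Q kap n : ℕ} (hQ : 0 < Q) (hn0 : 0 < n) (hn : n ≤ kap * Q)
    (xi : LoadState Q kap n) :
    ∑ y, loadP Q kap n xi y * sqDev (n / Q) (load y)
      ≤ (1 - 2 * ((kap * Q : ℝ) / (n * (1 + kap * Q - n)))) * sqDev (n / Q) (load xi) + 2 := by
  have hnN : (n : ℝ) ≤ kap * Q := by exact_mod_cast hn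
  have hn' : (0 : ℝ) < n := by exact_mod_cast hn0
  have hD : (0 : ℝ) < n * (1 + kap * Q - n) := mul_pos hn' (by linarith)
  have hM : ((1 + kap * Q - n : ℕ) : ℝ) = 1 + kap * Q - n := by
    rw [Nat.cast_sub (by omega)]; push_cast; ring
  rw [sum_loadP_mul, hM, div_le_iff₀ hD]
  set Z := sqDev (n / Q) (load xi) with hZ
  have hsplit : (∑ m, ∑ p, if m ≠ p then
        load xi m * (kap - load xi p) * sqDev (n / Q) (moved (load xi) m p) else 0)
      = (∑ m, ∑ p, if m ≠ p then load xi m * (kap - load xi p) else 0) * (Z + 2)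
        + ∑ m, ∑ p, load xi m * (kap - load xi p) * (2 * (load xi p - load xi m)) := by
    simp only [Finset.sum_mul]
    rw [← Finset.sum_add_distrib]
    refine Finset.sum_congr rfl fun m _ => ?_
    rw [← Finset.sum_add_distrib]
    refine Finset.sum_congr rfl fun p _ => ?_
    by_cases h : m = p
    · simp [h]
    · rw [if_pos h, if_pos h, sqDev_moved _ _ h]
      ring
  have hw := sum_weights xi
  have hd : 0 ≤ ∑ v, load xi v * (1 + kap - load xi v) :=
    Finset.sum_nonneg fun v _ => mul_nonneg (load_nonneg xi v) (by linarith [load_le xi v])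
  rw [hsplit, sum_linear_drift hQ]
  set A := ∑ v, load xi v * (1 + kap - load xi v)
  set W := ∑ m, ∑ p, if m ≠ p then load xi m * (kap - load xi p) else 0
  have hR : ((1 - 2 * ((kap * Q : ℝ) / (n * (1 + kap * Q - n)))) * Z + 2)
        * (n * (1 + kap * Q - n))
      = (A + W) * Z - 2 * (kap * Q) * Z + 2 * (A + W) := by
    have hc : (kap * Q : ℝ) / (n * (1 + kap * Q - n)) * (n * (1 + kap * Q - n)) = kap * Q :=
      div_mul_cancel₀ _ hD.ne'
    rw [hw]
    linear_combination (-2 * Z) * hc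
  rw [hR]
  linarith

/-! ### Second moment at time `t_N` -/

/-- The exponential factor accumulated by time `t_N` is `O(1/N)`. -/
lemma exp_decay {rho N n t : ℝ} (h1 : rho < 1) (hN : 1 ≤ N) (hn0 : 0 < n)
    (hn : n ≤ rho * N) (hn1 : rho * N < n + 1)
    (ht : (1/2) * (1 - rho) * rho * N * Real.log N ≤ t) :
    Real.exp (-(2 * (N / (n * (1 + N - n))) * t)) ≤ Real.exp (2 / (1 - rho)) / N := by
  have hNp : 0 < N := by linarith
  have hr : 0 < 1 - rho := by linarith
  have hL0 : 0 ≤ Real.log N := Real.log_nonneg hN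
  have hLN : Real.log N ≤ N := by linarith [Real.log_le_sub_one_of_pos hNp]
  have hM : 0 < 1 + N - n := by nlinarith
  have hD : 0 < n * (1 + N - n) := mul_pos hn0 hM
  have hrho : 0 < rho := by
    by_contra hneg
    nlinarith
  have hDle : n * (1 + N - n) ≤ rho * N * ((1 - rho) * N + 2) :=
    mul_le_mul hn (by linarith) hM.le (by positivity)
  have hkey : Real.log N - 2 / (1 - rho) ≤ 2 * (N / (n * (1 + N - n))) * t := by
    have ha : 2 * (N / (n * (1 + N - n))) * ((1/2) * (1 - rho) * rho * N * Real.log N)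
        ≤ 2 * (N / (n * (1 + N - n))) * t := by gcongr
    refine le_trans ?_ ha
    have hb : N / (rho * N * ((1 - rho) * N + 2)) ≤ N / (n * (1 + N - n)) := by gcongr
    have hc : 2 * (N / (rho * N * ((1 - rho) * N + 2)))
          * ((1/2) * (1 - rho) * rho * N * Real.log N)
        ≤ 2 * (N / (n * (1 + N - n))) * ((1/2) * (1 - rho) * rho * N * Real.log N) := by
      gcongr
    refine le_trans ?_ hc
    have hE : 0 < (1 - rho) * N + 2 := by positivity
    have hd : 2 * (N / (rho * N * ((1 - rho) * N + 2)))
          * ((1/2) * (1 - rho) * rho * N * Real.log N)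
        = (1 - rho) * N * Real.log N / ((1 - rho) * N + 2) := by
      field_simp
    rw [hd, le_div_iff₀ hE]
    have he : (Real.log N - 2 / (1 - rho)) * ((1 - rho) * N + 2)
        = (1 - rho) * N * Real.log N + 2 * (Real.log N - N) - 4 / (1 - rho) := by
      field_simp
      ring
    have : 0 < 4 / (1 - rho) := by positivity
    rw [he]
    linarith
  calc Real.exp (-(2 * (N / (n * (1 + N - n))) * t))
      ≤ Real.exp (2 / (1 - rho) - Real.log N) := Real.exp_le_exp.2 (by linarith)
    _ = _ := by rw [Real.exp_sub, Real.exp_log hNp]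

lemma sqDev_load_le {Q kap n : ℕ} (hQ : 0 < Q) (hn : n ≤ kap * Q) (xi : LoadState Q kap n) :
    sqDev (n / Q) (load xi) ≤ Q * ((kap : ℝ) * Q)^2 := by
  have hQ' : (1 : ℝ) ≤ Q := by exact_mod_cast hQ
  have hnN : (n : ℝ) ≤ kap * Q := by exact_mod_cast hn
  have h1 : (n : ℝ) / Q ≤ kap := by rw [div_le_iff₀ (by linarith)]; exact hnN
  have h0 : 0 ≤ (n : ℝ) / Q := by positivity
  have hk : (kap : ℝ) ≤ kap * Q := by nlinarith [(Nat.cast_nonneg kap : (0 : ℝ) ≤ kap)]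
  have : ∀ v ∈ Finset.univ, (load xi v - n / Q)^2 ≤ ((kap : ℝ) * Q)^2 := by
    intro v _
    have := load_le xi v
    have := load_nonneg xi v
    exact sq_le_sq' (by linarith) (by linarith)
  unfold sqDev
  refine (Finset.sum_le_sum this).trans ?_
  simp

lemma second_moment {Q kap n t : ℕ} {rho : ℝ} (hQ : 0 < Q) (hkap : 0 < kap) (h0 : 0 < rho)
    (h1 : rho < 1) (hn : n = ⌊rho * ((kap * Q : ℕ) : ℝ)⌋₊)
    (ht : (1/2) * (1 - rho) * rho * ((kap * Q : ℕ) : ℝ) * Real.log ((kap * Q : ℕ) : ℝ) ≤ t)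
    (xi0 : LoadState Q kap n) :
    ∑ xi, evolve (loadP Q kap n) (delta xi0) t xi * sqDev (n / Q) (load xi)
      ≤ (Q * Real.exp (2 / (1 - rho)) + 4) * ((kap * Q : ℕ) : ℝ) := by
  have hN1 : (1 : ℝ) ≤ ((kap * Q : ℕ) : ℝ) := by exact_mod_cast Nat.mul_pos hkap hQ
  have hnle : (n : ℝ) ≤ rho * ((kap * Q : ℕ) : ℝ) := by
    rw [hn]; exact Nat.floor_le (by positivity)
  have hnlt : rho * ((kap * Q : ℕ) : ℝ) < n + 1 := by
    rw [hn]; exact Nat.lt_floor_add_one _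
  have hnN' : (n : ℝ) ≤ ((kap * Q : ℕ) : ℝ) := by nlinarith
  have hnN : n ≤ kap * Q := by exact_mod_cast hnN'
  rcases Nat.eq_zero_or_pos n with hz | hpos
  -- With `n = 0` every load vanishes, so every term of the sum does.
  · have hZ : ∀ xi : LoadState Q kap n, sqDev (n / Q) (load xi) = 0 := by
      intro xi
      have hs : ∑ v, load xi v = 0 := (sum_load xi).trans (by exact_mod_cast hz)
      have hz' : (n : ℝ) = 0 := by exact_mod_cast hz
      rw [Finset.sum_eq_zero_iff_of_nonneg fun v _ => load_nonneg xi v] at hs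
      unfold sqDev
      exact Finset.sum_eq_zero fun v hv => by rw [hs v hv, hz']; simp
    simp only [hZ, mul_zero, Finset.sum_const_zero]
    positivity
  have hn' : (0 : ℝ) < n := by exact_mod_cast hpos
  have hcast : ((kap * Q : ℕ) : ℝ) = kap * Q := by push_cast; ring
  have hdec := exp_decay h1 hN1 hn' hnle hnlt ht
  set lam : ℝ := ((kap * Q : ℕ) : ℝ) / (n * (1 + ((kap * Q : ℕ) : ℝ) - n)) with hlam
  have hM : 0 < 1 + ((kap * Q : ℕ) : ℝ) - n := by linarith
  have hlam0 : 0 < lam := by positivity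
  have hinv : 1 / lam ≤ 2 * ((kap * Q : ℕ) : ℝ) := by
    rw [hlam, one_div_div, div_le_iff₀ (by linarith)]
    nlinarith
  have hexp : Real.exp (-(2 * lam)) ≤ 1 / (1 + 2 * lam) := by
    rw [Real.exp_neg, ← one_div]
    exact one_div_le_one_div_of_le (by positivity) (by linarith [Real.add_one_le_exp (2 * lam)])
  have hfix : Real.exp (-(2 * lam)) * (2 + 1 / lam) + 2 ≤ 2 + 1 / lam := by
    have h2 : 1 / (1 + 2 * lam) * (2 + 1 / lam) = 1 / lam := by field_simp; ring
    have h3 := mul_le_mul_of_nonneg_right hexp (by positivity : 0 ≤ 2 + 1 / lam)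
    linarith
  have hmain := sum_evolve_drift (loadP Q kap n) xi0 (loadP_nonneg Q kap n)
    (sum_loadP_le_one hnN) (fun xi => sqDev (n / Q) (load xi)) (Real.exp (-(2 * lam)))
    (2 + 1 / lam) (Real.exp_pos _).le (by positivity) hfix
    (fun xi => by
      refine (sum_loadP_sqDev_le hQ hpos hnN xi).trans ?_
      rw [← hcast, ← hlam]
      have := Real.add_one_le_exp (-(2 * lam))
      have := mul_le_mul_of_nonneg_right (by linarith : 1 - 2 * lam ≤ Real.exp (-(2 * lam)))
        (sqDev_nonneg (n / Q) (load xi))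
      linarith) t
  have hpow : Real.exp (-(2 * lam)) ^ t = Real.exp (-(2 * lam * t)) := by
    rw [← Real.exp_nat_mul]; congr 1; ring
  rw [hpow] at hmain
  have hZ0 := sqDev_load_le hQ hnN xi0
  rw [← hcast] at hZ0
  have hterm : Real.exp (-(2 * lam * t)) * sqDev (n / Q) (load xi0)
      ≤ Real.exp (2 / (1 - rho)) / ((kap * Q : ℕ) : ℝ) * (Q * ((kap * Q : ℕ) : ℝ)^2) :=
    mul_le_mul hdec hZ0 (sqDev_nonneg _ _) (by positivity)
  have heq : Real.exp (2 / (1 - rho)) / ((kap * Q : ℕ) : ℝ) * (Q * ((kap * Q : ℕ) : ℝ)^2)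
      = Q * Real.exp (2 / (1 - rho)) * ((kap * Q : ℕ) : ℝ) := by field_simp
  rw [heq] at hterm
  linarith

/-- Changing the centre from `n/Q` to `ρN/Q` costs at most a bounded amount, as `n = ⌊ρN⌋`. -/
lemma dist_sq_le {Q : ℕ} (hQ : 0 < Q) {N n rho : ℝ} (hN : 1 ≤ N) (hn : n ≤ rho * N)
    (hn1 : rho * N < n + 1) (x : Fin Q → ℝ) :
    ∑ v, (x v / N - rho / Q)^2 ≤ (2 * sqDev (n / Q) x + 2) / N^2 := by
  have hQ' : (1 : ℝ) ≤ Q := by exact_mod_cast hQ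
  have hNp : 0 < N := by linarith
  rw [le_div_iff₀ (by positivity), Finset.sum_mul]
  have hv : ∀ v ∈ Finset.univ, (x v / N - rho / Q)^2 * N^2 ≤ 2 * (x v - n / Q)^2 + 2 / Q := by
    intro v _
    have e : (x v / N - rho / Q)^2 * N^2 = ((x v - n / Q) - (rho * N - n) / Q)^2 := by
      field_simp
      ring
    have hf : ((rho * N - n) / Q)^2 ≤ 1 / Q := by
      rw [div_pow, div_le_div_iff₀ (by positivity) (by positivity)]
      have : (rho * N - n)^2 ≤ 1 := by nlinarith
      nlinarith
    have h2 : (2 : ℝ) / Q = 2 * (1 / Q) := by ring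
    rw [e, h2]
    nlinarith [sq_nonneg ((x v - n / Q) + (rho * N - n) / Q)]
  refine (Finset.sum_le_sum hv).trans ?_
  rw [Finset.sum_add_distrib, ← Finset.mul_sum]
  unfold sqDev
  simp
  field_simp
  norm_num

/-- at time `t_N = ⌈(1/2)(1-rho) rho N log N⌉` the load profile chain is
within `O(1/sqrt N)` of the constant profile, except with probability `C Q / R^2`. -/
theorem statement4 (Q : Nat) (hQ : 2 ≤ Q) (rho : Real) (hrho0 : 0 < rho) (hrho1 : rho < 1) :
    ∃ C : Real, ∀ kap : Nat, 0 < kap → ∀ n : Nat, n = ⌊rho * ((kap * Q : Nat) : Real)⌋₊ →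
      ∀ R : Real, 0 < R → ∀ xi0 : LoadState Q kap n,
        (∑ xi : LoadState Q kap n,
            if ¬ loadNear Q kap n rho xi (R / Real.sqrt ((kap * Q : Nat) : Real)) then
              evolve (loadP Q kap n) (delta xi0)
                ⌈(1/2) * (1 - rho) * rho * ((kap * Q : Nat) : Real)
                  * Real.log ((kap * Q : Nat) : Real)⌉₊ xi
            else 0)
          ≤ C * (Q : Real) / R^2 := by
  refine ⟨2 * (Q * Real.exp (2 / (1 - rho)) + 4) + 2, ?_⟩
  intro kap hkap n hn R hR xi0
  have hQ0 : 0 < Q := by omega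
  have hQ1 : (1 : ℝ) ≤ Q := by exact_mod_cast hQ0
  have hN1 : (1 : ℝ) ≤ ((kap * Q : ℕ) : ℝ) := by exact_mod_cast Nat.mul_pos hkap hQ0
  have hnle : (n : ℝ) ≤ rho * ((kap * Q : ℕ) : ℝ) := by
    rw [hn]; exact Nat.floor_le (by positivity)
  have hnlt : rho * ((kap * Q : ℕ) : ℝ) < n + 1 := by
    rw [hn]; exact Nat.lt_floor_add_one _
  have hnN' : (n : ℝ) ≤ ((kap * Q : ℕ) : ℝ) := by nlinarith
  have hnN : n ≤ kap * Q := by exact_mod_cast hnN'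
  have hsm := second_moment hQ0 hkap hrho0 hrho1 hn (Nat.le_ceil _) xi0
  set t := ⌈(1/2) * (1 - rho) * rho * ((kap * Q : Nat) : Real)
                  * Real.log ((kap * Q : Nat) : Real)⌉₊
  set N : ℝ := ((kap * Q : ℕ) : ℝ) with hNdef
  have hNp : 0 < N := by linarith
  have hmu : ∀ x, 0 ≤ delta xi0 x := fun x => by unfold delta; split_ifs <;> norm_num
  have hev := evolve_nonneg (loadP Q kap n) (delta xi0) (loadP_nonneg Q kap n) hmu t
  have hmass := sum_evolve_le_one (loadP Q kap n) xi0 (loadP_nonneg Q kap n)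
    (sum_loadP_le_one hnN) t
  -- Markov's inequality, pointwise: the indicator is at most `(2 Z + 2) / (N R²)`.
  have hpt : ∀ xi ∈ Finset.univ,
      (if ¬ loadNear Q kap n rho xi (R / Real.sqrt N) then
        evolve (loadP Q kap n) (delta xi0) t xi else 0)
      ≤ evolve (loadP Q kap n) (delta xi0) t xi
          * ((2 * sqDev (n / Q) (load xi) + 2) / (N * R^2)) := by
    intro xi _
    have hZ := sqDev_nonneg (n / Q) (load xi)
    by_cases h : loadNear Q kap n rho xi (R / Real.sqrt N)
    · rw [if_neg (not_not.2 h)]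
      exact mul_nonneg (hev xi) (by positivity)
    · rw [if_pos h]
      refine le_mul_of_one_le_right (hev xi) ?_
      unfold loadNear at h
      rw [not_le, Real.lt_sqrt (by positivity), div_pow, Real.sq_sqrt hNp.le] at h
      have h2 := h.le.trans (dist_sq_le hQ0 hN1 hnle hnlt (load xi))
      rw [div_le_div_iff₀ hNp (by positivity)] at h2
      rw [one_le_div (by positivity)]
      have h3 : (N * R^2) * N ≤ (2 * sqDev (n / Q) (load xi) + 2) * N := by linarith
      exact le_of_mul_le_mul_right h3 hNp
  refine (Finset.sum_le_sum hpt).trans ?_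
  have hsum : ∑ xi, evolve (loadP Q kap n) (delta xi0) t xi
          * ((2 * sqDev (n / Q) (load xi) + 2) / (N * R^2))
      = (2 * (∑ xi, evolve (loadP Q kap n) (delta xi0) t xi * sqDev (n / Q) (load xi))
          + 2 * ∑ xi, evolve (loadP Q kap n) (delta xi0) t xi) / (N * R^2) := by
    rw [Finset.mul_sum, Finset.mul_sum, ← Finset.sum_add_distrib, Finset.sum_div]
    exact Finset.sum_congr rfl fun xi _ => by ring
  rw [hsum, div_le_div_iff₀ (by positivity) (by positivity)]
  set B : ℝ := Q * Real.exp (2 / (1 - rho)) + 4 with hB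
  have hB0 : 0 ≤ B := by positivity
  have hnum : 2 * (∑ xi, evolve (loadP Q kap n) (delta xi0) t xi * sqDev (n / Q) (load xi))
          + 2 * ∑ xi, evolve (loadP Q kap n) (delta xi0) t xi ≤ (2 * B + 2) * Q * N := by
    have : (2 * B + 2) * N ≤ (2 * B + 2) * Q * N := by
      have : 2 * B + 2 ≤ (2 * B + 2) * Q := le_mul_of_one_le_right (by positivity) hQ1
      gcongr
    linarith
  calc _ ≤ (2 * B + 2) * Q * N * R^2 := by gcongr
    _ = _ := by ring

end CongestionPaper
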